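/- Let $\mu>0$ and $\delta>0$ be real constants with $\mu^2>12\delta^2$, and set $t_o:=\frac{2\delta}{\sqrt{\mu^2-4\delta^2}}$. Define $\lambda(t):=\dfrac{(1+t^2)^3\big[(40\delta^2-7\mu^2)t^2+\mu^2+8\delta^2\big]}{\mu(1-t^2)^4}$ for $0\le t\le t_o$ (note $t_o<1$). Then the equation $\lambda'(t)=0$ has exactly one solution in the open interval $(0,t_o)$, namely $t_1=\frac{\sqrt{2}\,\delta}{\sqrt{\mu^2-6\delta^2}}$; in particular $0<t_1<t_o$. -/

import Mathlib

open Set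

/-- The derivative of `(1+x²)³[(40δ²-7μ²)x²+μ²+8δ²]/(μ(1-x²)⁴)`, in factored form. -/
theorem hasDerivAt_boundary_curvature {μ t : ℝ} (δ : ℝ) (hμ : μ ≠ 0) (ht : 1 - t ^ 2 ≠ 0) :
    HasDerivAt (fun x : ℝ =>
        ((1 + x ^ 2) ^ 3 * ((40 * δ ^ 2 - 7 * μ ^ 2) * x ^ 2 + μ ^ 2 + 8 * δ ^ 2)) /
          (μ * (1 - x ^ 2) ^ 4))
      (96 * t * (1 + t ^ 2) ^ 2 * (2 * δ ^ 2 - (μ ^ 2 - 6 * δ ^ 2) * t ^ 2) /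
        (μ * (1 - t ^ 2) ^ 5)) t := by
  have hsq : HasDerivAt (fun x : ℝ => x ^ 2) (2 * t) t := by
    simpa using hasDerivAt_pow 2 t
  have hnum := ((hsq.const_add 1).pow 3).mul
    (((hsq.const_mul (40 * δ ^ 2 - 7 * μ ^ 2)).add_const (μ ^ 2)).add_const (8 * δ ^ 2))
  have hden := ((hsq.const_sub 1).pow 4).const_mul μ
  refine (hnum.div hden (mul_ne_zero hμ (pow_ne_zero 4 ht))).congr_deriv ?_
  simp only [Pi.mul_apply, Pi.pow_apply]
  field_simp
  push_cast
  ring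

/-- for `μ² > 12δ²` and
`λ(t) = (1+t²)³[(40δ²-7μ²)t²+μ²+8δ²]/(μ(1-t²)⁴)`, the equation `λ'(t) = 0` has exactly
one solution in `(0, t_o)`, namely `t₁ = √2δ/√(μ²-6δ²)`, where
`t_o = 2δ/√(μ²-4δ²) < 1`; in particular `0 < t₁ < t_o`. -/
theorem stmt_18 (μ δ t_o t₁ : ℝ) (hμ : 0 < μ) (hδ : 0 < δ)
    (hreg : 12 * δ ^ 2 < μ ^ 2)
    (hto : t_o = 2 * δ / Real.sqrt (μ ^ 2 - 4 * δ ^ 2))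
    (ht₁ : t₁ = Real.sqrt 2 * δ / Real.sqrt (μ ^ 2 - 6 * δ ^ 2)) :
    t_o < 1 ∧
    (0 < t₁ ∧ t₁ < t_o) ∧
    ∀ t ∈ Ioo (0:ℝ) t_o,
      (deriv (fun x : ℝ =>
          ((1 + x ^ 2) ^ 3 * ((40 * δ ^ 2 - 7 * μ ^ 2) * x ^ 2 + μ ^ 2 + 8 * δ ^ 2)) /
            (μ * (1 - x ^ 2) ^ 4)) t = 0 ↔ t = t₁) := by
  have ha : 0 < μ ^ 2 - 4 * δ ^ 2 := by nlinarith
  have hb : 0 < μ ^ 2 - 6 * δ ^ 2 := by nlinarith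
  have hto_pos : 0 < t_o := by rw [hto]; positivity
  have ht₁_pos : 0 < t₁ := by rw [ht₁]; positivity
  have hto_sq : t_o ^ 2 = 4 * δ ^ 2 / (μ ^ 2 - 4 * δ ^ 2) := by
    rw [hto, div_pow, Real.sq_sqrt ha.le]; ring
  have ht₁_sq : t₁ ^ 2 = 2 * δ ^ 2 / (μ ^ 2 - 6 * δ ^ 2) := by
    rw [ht₁, div_pow, mul_pow, Real.sq_sqrt hb.le, Real.sq_sqrt zero_le_two]
  have hto_lt : t_o < 1 := by
    rw [← sq_lt_one_iff₀ hto_pos.le, hto_sq, div_lt_one ha]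
    nlinarith
  refine ⟨hto_lt, ⟨ht₁_pos, ?_⟩, ?_⟩
  · rw [← sq_lt_sq₀ ht₁_pos.le hto_pos.le, hto_sq, ht₁_sq, div_lt_div_iff₀ hb ha]
    nlinarith [mul_pos (pow_pos hδ 2) (sub_pos.2 hreg), pow_pos hδ 4]
  · rintro t ⟨ht0, ht⟩
    have hden : 0 < 1 - t ^ 2 := by nlinarith
    rw [(hasDerivAt_boundary_curvature δ hμ.ne' hden.ne').deriv, div_eq_zero_iff,
      or_iff_left (by positivity), mul_eq_zero, or_iff_right (by positivity),
      ← sq_eq_sq₀ ht0.le ht₁_pos.le, ht₁_sq, eq_div_iff hb.ne', sub_eq_zero, eq_comm,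
      mul_comm]
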